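/- arXiv:1407.5255 — 2 statements merged into one kernel-verified Lean document; each statement's English description precedes it below -/
import Mathlib

section
/- For all integers r, s, t ≥ 1, the following identity of polynomials in x holds: φ(θ_{r,s,t};x) = (x−3)·φ(U_r;x)·φ(U_s;x)·φ(U_t;x) − φ(U_{r−1};x)·φ(U_s;x)·φ(U_t;x) − φ(U_r;x)·φ(U_{s−1};x)·φ(U_t;x) − φ(U_r;x)·φ(U_s;x)·φ(U_{t−1};x). -/
/-!
Deleting the degree-3 vertex `u` from `Θ_{r,s,t}` leaves three paths, each attached by its last
vertex to the other degree-3 vertex `v`. With the vertices sorted by path, `θ_{r,s,t}` is therefore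
block diagonal with blocks `U_r`, `U_s`, `U_t`, bordered by the row and column of `v`, whose only
off-diagonal nonzero entries are one `-1` for each path, at the last index of its block
(`thetaMinor_submatrix_thetaIdx`).

Over the field of rational functions, the block `xI - U_n` is invertible, and taking its Schur
complement (`det_fromBlocks_single`) contributes the factor `φ(U_n)` and changes the diagonal entry
of `v` by `-((xI - U_n)⁻¹)_{last,last}`, which is `-φ(U_{n-1}) / φ(U_n)` by the adjugate formula
(`adjugate_charmatrix_Umatrix_last`). After the three blocks are eliminated,
`φ(θ) = φ(U_r) φ(U_s) φ(U_t) (x - 3 - φ(U_{r-1})/φ(U_r) - φ(U_{s-1})/φ(U_s) - φ(U_{t-1})/φ(U_t))`,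
which is the claim once multiplied out.
-/


open Polynomial Matrix SimpleGraph
open scoped Classical

/-- The matrix `U_n`: tridiagonal, 2 on the diagonal, -1 on the sub/super-diagonal. -/
def Umatrix (R : Type*) [Ring R] (n : ℕ) : Matrix (Fin n) (Fin n) R :=
  Matrix.of fun i j =>
    if (i : ℕ) = (j : ℕ) then 2
    else if (i : ℕ) + 1 = (j : ℕ) ∨ (j : ℕ) + 1 = (i : ℕ) then -1 else 0

/-- Auxiliary relation for the dumbbell graph `D_{p,k,q}` on vertices `0,…,p+q+k-1`:
vertices `0,…,p-1` form the cycle `C_p`, vertices `p,…,p+q-1` form the cycle `C_q`, and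
vertices `p+q,…,p+q+k-1` are the internal vertices of the connecting path (in order),
with vertex `0` of `C_p` and vertex `p` of `C_q` being its endpoints. -/
def dumbbellRel (p k q : ℕ) (a b : ℕ) : Prop :=
  (b = a + 1 ∧ b < p) ∨
  (a = 0 ∧ b = p - 1) ∨
  (p ≤ a ∧ b = a + 1 ∧ b < p + q) ∨
  (a = p ∧ b = p + q - 1) ∨
  (p + q ≤ a ∧ b = a + 1 ∧ b < p + q + k) ∨
  (if k = 0 then a = 0 ∧ b = p
   else (a = 0 ∧ b = p + q) ∨ (a = p ∧ b = p + q + k - 1))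

/-- The dumbbell graph `D_{p,k,q}` on `p + q + k` vertices. -/
def dumbbellGraph (p k q : ℕ) : SimpleGraph (Fin (p + q + k)) :=
  SimpleGraph.fromRel (fun a b => dumbbellRel p k q (a : ℕ) (b : ℕ))

/-- One path of a theta graph: endpoints `0` and `v`, with `m` internal vertices
`L, L+1, …, L+m-1` (in order); if `m = 0` the path is the single edge `0v`. -/
def thetaBlockRel (v L m : ℕ) (a b : ℕ) : Prop :=
  if m = 0 then a = 0 ∧ b = v
  else (a = 0 ∧ b = L) ∨ (L ≤ a ∧ b = a + 1 ∧ b < L + m) ∨ (a = L + m - 1 ∧ b = v)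

/-- The theta graph `Θ_{r,s,t}` on `r + s + t + 2` vertices: the degree-3 vertices are
`u = 0` and `v = r+s+t+1`, joined by three internally disjoint paths with `r`, `s`, `t`
internal vertices respectively. -/
def thetaGraph (r s t : ℕ) : SimpleGraph (Fin (r + s + t + 2)) :=
  SimpleGraph.fromRel (fun a b =>
    thetaBlockRel (r + s + t + 1) 1 r (a : ℕ) (b : ℕ) ∨
    thetaBlockRel (r + s + t + 1) (r + 1) s (a : ℕ) (b : ℕ) ∨
    thetaBlockRel (r + s + t + 1) (r + s + 1) t (a : ℕ) (b : ℕ))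

/-- The matrix `L_{q,k}`: the principal submatrix of the Laplacian matrix of a dumbbell
graph `D_{p,k,q}` obtained by deleting the rows and columns of the `p` vertices of `C_p`.
Indices `0,…,k-1` are the path vertices `u_1,…,u_k` and indices `k,…,k+q-1` are the cycle
vertices `w_1,…,w_q`. -/
def dumbbellMinor (R : Type*) [Ring R] (q k : ℕ) : Matrix (Fin (q + k)) (Fin (q + k)) R :=
  Matrix.of fun a b =>
    if (a : ℕ) = (b : ℕ) then (if (a : ℕ) = k then 3 else 2)
    else if (a : ℕ) + 1 = (b : ℕ) ∨ (b : ℕ) + 1 = (a : ℕ) ∨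
            ((a : ℕ) = k ∧ (b : ℕ) = k + q - 1) ∨ ((a : ℕ) = k + q - 1 ∧ (b : ℕ) = k)
    then -1 else 0

/-- The matrix `θ_{r,s,t}`: the principal submatrix of the Laplacian matrix of the theta
graph `Θ_{r,s,t}` obtained by deleting the row and column of the degree-3 vertex `u = 0`. -/
noncomputable def thetaMinor (r s t : ℕ) :
    Matrix (Fin (r + s + t + 1)) (Fin (r + s + t + 1)) ℚ :=
  ((thetaGraph r s t).lapMatrix ℚ).submatrix (fun i => i.succ) (fun i => i.succ)

/-- The number of spanning trees of a graph. -/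
noncomputable def spanningTreeCount {V : Type*} (G : SimpleGraph V) : ℕ :=
  Nat.card {H : G.Subgraph // H.verts = Set.univ ∧ H.coe.IsTree}

/-! ### The matrices `U_n` -/

/-- Deleting the last row and column of `xI - U_{n+1}` leaves `xI - U_n`. -/
lemma adjugate_charmatrix_Umatrix_last (n : ℕ) :
    (charmatrix (Umatrix ℚ (n + 1))).adjugate (Fin.last n) (Fin.last n)
      = (Umatrix ℚ n).charpoly := by
  rw [adjugate_fin_succ_eq_det_submatrix, Matrix.charpoly]
  have h : (charmatrix (Umatrix ℚ (n + 1))).submatrix (Fin.last n).succAbove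
      (Fin.last n).succAbove = charmatrix (Umatrix ℚ n) := by
    ext1 i j
    simp [charmatrix_apply, Umatrix, Matrix.diagonal_apply, Fin.ext_iff]
  rw [h, (Even.add_self (Fin.last n : ℕ)).neg_one_pow, one_mul]

lemma det_charmatrix_Umatrix_map_ne_zero (n : ℕ) :
    ((charmatrix (Umatrix ℚ n)).map (algebraMap ℚ[X] (RatFunc ℚ))).det ≠ 0 := by
  rw [← RingHom.mapMatrix_apply, ← RingHom.map_det]
  exact (map_ne_zero_iff _ (RatFunc.algebraMap_injective ℚ)).2 (charpoly_monic _).ne_zero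

/-! ### Adjacency and degrees in the theta graph -/

/-- One oriented path edge of `thetaBlockRel` not meeting the deleted vertex `u`, in terms of the
indices of `thetaMinor` (vertex label minus one). -/
def pathStep (v L m a b : ℕ) : Prop :=
  (L ≤ a ∧ b = a + 1 ∧ b < L + m) ∨ (a + 1 = L + m ∧ b = v)

/-- The oriented edges of `Θ_{r,s,t}` that avoid `u`, in terms of the indices `0, …, r+s+t` of
`thetaMinor`. -/
def thetaStep (r s t a b : ℕ) : Prop :=
  pathStep (r + s + t) 0 r a b ∨ pathStep (r + s + t) r s a b ∨ pathStep (r + s + t) (r + s) t a b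

lemma thetaBlockRel_succ_succ {m : ℕ} (hm : 1 ≤ m) (v L a b : ℕ) :
    thetaBlockRel (v + 1) (L + 1) m (a + 1) (b + 1) ↔ pathStep v L m a b := by
  rw [thetaBlockRel, if_neg (by omega), pathStep]
  omega

lemma thetaBlockRel_zero_succ {m : ℕ} (hm : 1 ≤ m) (v L b : ℕ) :
    thetaBlockRel (v + 1) (L + 1) m 0 (b + 1) ↔ b = L := by
  rw [thetaBlockRel, if_neg (by omega)]
  omega

lemma not_thetaBlockRel_succ_zero {m : ℕ} (hm : 1 ≤ m) (v L a : ℕ) :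
    ¬ thetaBlockRel (v + 1) (L + 1) m (a + 1) 0 := by
  rw [thetaBlockRel, if_neg (by omega)]
  omega

lemma thetaGraph_adj_succ {r s t : ℕ} (hr : 1 ≤ r) (hs : 1 ≤ s) (ht : 1 ≤ t)
    (i j : Fin (r + s + t + 1)) :
    (thetaGraph r s t).Adj i.succ j.succ ↔
      (i : ℕ) ≠ j ∧ (thetaStep r s t i j ∨ thetaStep r s t j i) := by
  have h1 := thetaBlockRel_succ_succ hr (r + s + t) 0
  simp only [thetaGraph, SimpleGraph.fromRel_adj, thetaStep, ne_eq, Fin.ext_iff,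
    Fin.val_succ, Nat.add_right_cancel_iff, thetaBlockRel_succ_succ hs,
    thetaBlockRel_succ_succ ht, ← h1, zero_add]

lemma thetaGraph_adj_succ_zero {r s t : ℕ} (hr : 1 ≤ r) (hs : 1 ≤ s) (ht : 1 ≤ t)
    (i : Fin (r + s + t + 1)) :
    (thetaGraph r s t).Adj i.succ 0 ↔ (i : ℕ) = 0 ∨ (i : ℕ) = r ∨ (i : ℕ) = r + s := by
  have h1 := thetaBlockRel_zero_succ hr (r + s + t) 0
  have h2 := not_thetaBlockRel_succ_zero hr (r + s + t) 0
  rw [zero_add] at h1 h2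
  simp only [thetaGraph, SimpleGraph.fromRel_adj, ne_eq, Fin.succ_ne_zero, not_false_eq_true,
    true_and, Fin.val_succ, Fin.val_zero, thetaBlockRel_zero_succ hs,
    thetaBlockRel_zero_succ ht, h1, h2, not_thetaBlockRel_succ_zero hs,
    not_thetaBlockRel_succ_zero ht, false_or]

/-- The vertex `v` has the last internal vertex of each path as a neighbour; an internal vertex
has a predecessor (or `u`) and a successor (or `v`). -/
lemma thetaGraph_degree_succ {r s t : ℕ} (hr : 1 ≤ r) (hs : 1 ≤ s) (ht : 1 ≤ t)
    (i : Fin (r + s + t + 1)) :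
    (thetaGraph r s t).degree i.succ = if (i : ℕ) = r + s + t then 3 else 2 := by
  have hi := i.isLt
  rw [← SimpleGraph.card_neighborFinset_eq_degree]
  split_ifs with h
  · rw [Finset.card_eq_three]
    -- Graph labels of the ends next to `v` of the three paths.
    refine ⟨⟨r, by omega⟩, ⟨r + s, by omega⟩, ⟨r + s + t, by omega⟩, ?_, ?_, ?_, ?_⟩
    · simp only [ne_eq, Fin.ext_iff]; omega
    · simp only [ne_eq, Fin.ext_iff]; omega
    · simp only [ne_eq, Fin.ext_iff]; omega
    · ext b
      rw [SimpleGraph.mem_neighborFinset]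
      refine Fin.cases ?_ (fun b => ?_) b
      · rw [thetaGraph_adj_succ_zero hr hs ht]
        simp only [Finset.mem_insert, Finset.mem_singleton, Fin.ext_iff, Fin.val_zero]
        omega
      · have hb := b.isLt
        rw [thetaGraph_adj_succ hr hs ht]
        simp only [Finset.mem_insert, Finset.mem_singleton, Fin.ext_iff, Fin.val_succ, thetaStep,
          pathStep, h, and_true]
        constructor
        · rintro ⟨-, h | h⟩ <;> omega
        · rintro (h | h | h) <;> refine ⟨by omega, Or.inr ?_⟩ <;> omega
  -- Graph labels `p` and `q` of the predecessor and the successor of the internal vertex `i.succ`.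
  · obtain ⟨p, hp⟩ : ∃ p, p = if (i : ℕ) = r ∨ (i : ℕ) = r + s then 0 else (i : ℕ) := ⟨_, rfl⟩
    obtain ⟨q, hq⟩ : ∃ q, q = if (i : ℕ) + 1 = r ∨ (i : ℕ) + 1 = r + s then r + s + t + 1
        else (i : ℕ) + 2 := ⟨_, rfl⟩
    rw [Finset.card_eq_two]
    refine ⟨⟨p, by split_ifs at hp <;> omega⟩, ⟨q, by split_ifs at hq <;> omega⟩, ?_, ?_⟩
    · simp only [ne_eq, Fin.ext_iff]; split_ifs at hp hq <;> omega
    · ext b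
      rw [SimpleGraph.mem_neighborFinset]
      refine Fin.cases ?_ (fun b => ?_) b
      · rw [thetaGraph_adj_succ_zero hr hs ht]
        simp only [Finset.mem_insert, Finset.mem_singleton, Fin.ext_iff, Fin.val_zero]
        split_ifs at hp hq <;> omega
      · have hb := b.isLt
        rw [thetaGraph_adj_succ hr hs ht]
        simp only [Finset.mem_insert, Finset.mem_singleton, Fin.ext_iff, Fin.val_succ, thetaStep,
          pathStep]
        constructor
        · rintro ⟨-, (h | h | h) | (h | h | h)⟩ <;> split_ifs at hp hq <;> omega
        · rintro (h | h) <;> split_ifs at hp hq <;> refine ⟨by omega, ?_⟩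
          all_goals first
            | (exfalso; omega)
            | (refine Or.inl ?_; omega)
            | (refine Or.inr ?_; omega)

lemma thetaMinor_apply {r s t : ℕ} (hr : 1 ≤ r) (hs : 1 ≤ s) (ht : 1 ≤ t)
    (i j : Fin (r + s + t + 1)) :
    thetaMinor r s t i j = if (i : ℕ) = j then (if (i : ℕ) = r + s + t then 3 else 2)
      else if thetaStep r s t i j ∨ thetaStep r s t j i then -1 else 0 := by
  simp only [thetaMinor, Matrix.submatrix_apply, SimpleGraph.lapMatrix, Matrix.sub_apply,
    SimpleGraph.degMatrix, Matrix.diagonal_apply, SimpleGraph.adjMatrix_apply,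
    Fin.succ_inj, thetaGraph_degree_succ hr hs ht, thetaGraph_adj_succ hr hs ht, ← Fin.ext_iff]
  by_cases h : i = j
  · subst h
    simp only [if_true, ne_eq, not_true_eq_false, false_and, if_false, sub_zero]
    split_ifs <;> norm_num
  · have h' : (i : ℕ) ≠ j := fun e => h (Fin.ext e)
    simp only [h, h', ne_eq, not_false_eq_true, true_and, if_false]
    split_ifs <;> norm_num

/-- The index of `thetaMinor` corresponding to an internal vertex of one of the three paths,
or to `v`. -/
def thetaIdx (r s t : ℕ) : Fin r ⊕ (Fin s ⊕ (Fin t ⊕ Unit)) → Fin (r + s + t + 1)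
  | .inl i => ⟨i, by omega⟩
  | .inr (.inl i) => ⟨r + i, by omega⟩
  | .inr (.inr (.inl i)) => ⟨r + s + i, by omega⟩
  | .inr (.inr (.inr _)) => ⟨r + s + t, by omega⟩

lemma thetaIdx_bijective (r s t : ℕ) : Function.Bijective (thetaIdx r s t) := by
  rw [Fintype.bijective_iff_injective_and_card]
  constructor
  · rintro (i | i | i | i) (j | j | j | j) h <;>
      simp only [thetaIdx, Fin.mk.injEq] at h <;>
      first
        | rfl
        | (exfalso; omega)
        | (have : i = j := Fin.ext (by omega)
           rw [this])
  · simp only [Fintype.card_sum, Fintype.card_fin, Fintype.card_unit]; omega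

/-! ### Schur complements and the block form -/

/-- The Schur complement of a block attached to the rest through the single pair `(a, v)`. -/
lemma det_fromBlocks_single {K m n : Type*} [Field K] [Fintype m] [DecidableEq m] [Fintype n]
    [DecidableEq n] (A : Matrix m m K) (hA : A.det ≠ 0) (a : m) (v : n) (M : Matrix n n K) :
    (fromBlocks A (Matrix.single a v 1) (Matrix.single v a 1) M).det
      = A.det * (M - Matrix.single v v (A.adjugate a a / A.det)).det := by
  let _ := A.invertibleOfIsUnitDet (Ne.isUnit hA)
  rw [det_fromBlocks₁₁, invOf_eq_nonsing_inv, Matrix.single_mul_mul_single, Matrix.inv_def]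
  simp [div_eq_inv_mul]

/-- Correcting a diagonal entry in the second summand only changes the lower right block. -/
lemma fromBlocks_sub_single_inr {K m n : Type*} [Field K] [DecidableEq m]
    [DecidableEq n] (A : Matrix m m K) (B : Matrix m n K) (C : Matrix n m K) (D : Matrix n n K)
    (v : n) (c : K) :
    fromBlocks A B C D - Matrix.single (Sum.inr v) (Sum.inr v) c
      = fromBlocks A B C (D - Matrix.single v v c) := by
  ext (i | i) (j | j) <;> simp [Matrix.single_apply]

/-- A form of `if_congr` whose `Decidable` instances are found by unification: the conditions below
carry classical instances that differ from the synthesized ones. -/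
lemma ite_congr_of_iff {α : Type*} {p q : Prop} {_ : Decidable p} {_ : Decidable q} {a b c d : α}
    (h : p ↔ q) (hac : a = c) (hbd : b = d) : ite p a b = ite q c d :=
  if_congr h hac hbd

/-- The matrix `θ_{r+1,s+1,t+1}` in block form: each path contributes a block `U`, whose last
vertex is the only one adjacent to `v`. -/
lemma thetaMinor_submatrix_thetaIdx (r s t : ℕ) :
    (thetaMinor (r + 1) (s + 1) (t + 1)).submatrix
        (thetaIdx (r + 1) (s + 1) (t + 1)) (thetaIdx (r + 1) (s + 1) (t + 1)) =
      fromBlocks (Umatrix ℚ (r + 1))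
        (Matrix.single (Fin.last r) (.inr (.inr ())) (-1))
        (Matrix.single (.inr (.inr ())) (Fin.last r) (-1))
      (fromBlocks (Umatrix ℚ (s + 1))
        (Matrix.single (Fin.last s) (.inr ()) (-1))
        (Matrix.single (.inr ()) (Fin.last s) (-1))
      (fromBlocks (Umatrix ℚ (t + 1))
        (Matrix.single (Fin.last t) () (-1))
        (Matrix.single () (Fin.last t) (-1))
      (Matrix.of fun _ _ => 3))) := by
  ext (i | i | i | i) (j | j | j | j) <;>
  simp only [Matrix.submatrix_apply,
    thetaMinor_apply (Nat.le_add_left 1 r) (Nat.le_add_left 1 s) (Nat.le_add_left 1 t),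
    fromBlocks_apply₁₁, fromBlocks_apply₁₂, fromBlocks_apply₂₁, fromBlocks_apply₂₂,
    Umatrix, Matrix.of_apply, Matrix.single_apply, thetaIdx, Fin.ext_iff, thetaStep, pathStep,
    Fin.val_last, Sum.inr.injEq, reduceCtorEq, and_false, false_and, and_true, true_and, if_false] <;>
  first
    | exact ite_congr_of_iff (by omega) (if_neg (by omega)) (ite_congr_of_iff (by omega) rfl rfl)
    | exact (if_neg (by omega)).trans (if_neg (by omega))
    | exact (if_neg (by omega)).trans (if_congr (by omega) rfl rfl)
    | exact (if_pos trivial).trans (if_pos trivial)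

/-- Passing to characteristic matrices over the field of rational functions, one block at a time.
The entry `1` is `-(-1)`. -/
lemma charmatrix_fromBlocks_single_map {m n : Type*} [Fintype m] [DecidableEq m] [Fintype n]
    [DecidableEq n] (A : Matrix m m ℚ) (a : m) (v : n) (M : Matrix n n ℚ) :
    (charmatrix (fromBlocks A (Matrix.single a v (-1)) (Matrix.single v a (-1)) M)).map
        (algebraMap ℚ[X] (RatFunc ℚ)) =
      fromBlocks ((charmatrix A).map (algebraMap ℚ[X] (RatFunc ℚ)))
        (Matrix.single a v 1) (Matrix.single v a 1)
        ((charmatrix M).map (algebraMap ℚ[X] (RatFunc ℚ))) := by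
  rw [charmatrix_fromBlocks, fromBlocks_map]
  congr 1 <;> ext i j <;> simp [Matrix.single_apply, apply_ite]

/-! ### The characteristic polynomial -/

/-- `φ(θ_{r,s,t}) = (x−3)φ(U_r)φ(U_s)φ(U_t) − φ(U_{r−1})φ(U_s)φ(U_t)
− φ(U_r)φ(U_{s−1})φ(U_t) − φ(U_r)φ(U_s)φ(U_{t−1})`. -/
theorem charpoly_thetaMinor (r s t : ℕ) (hr : 1 ≤ r) (hs : 1 ≤ s) (ht : 1 ≤ t) :
    (thetaMinor r s t).charpoly =
      (X - 3) * (Umatrix ℚ r).charpoly * (Umatrix ℚ s).charpoly * (Umatrix ℚ t).charpoly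
        - (Umatrix ℚ (r - 1)).charpoly * (Umatrix ℚ s).charpoly * (Umatrix ℚ t).charpoly
        - (Umatrix ℚ r).charpoly * (Umatrix ℚ (s - 1)).charpoly * (Umatrix ℚ t).charpoly
        - (Umatrix ℚ r).charpoly * (Umatrix ℚ s).charpoly * (Umatrix ℚ (t - 1)).charpoly := by
  obtain ⟨r, rfl⟩ := Nat.exists_eq_add_of_le' hr
  obtain ⟨s, rfl⟩ := Nat.exists_eq_add_of_le' hs
  obtain ⟨t, rfl⟩ := Nat.exists_eq_add_of_le' ht
  -- Over the field of rational functions every block `xI - U_n` is invertible.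
  apply RatFunc.algebraMap_injective ℚ
  have hdet (n : ℕ) : ((charmatrix (Umatrix ℚ n)).map (algebraMap ℚ[X] (RatFunc ℚ))).det
      = algebraMap ℚ[X] (RatFunc ℚ) (Umatrix ℚ n).charpoly := by
    rw [← RingHom.mapMatrix_apply, ← RingHom.map_det, Matrix.charpoly]
  have hadj (n : ℕ) : ((charmatrix (Umatrix ℚ (n + 1))).map
        (algebraMap ℚ[X] (RatFunc ℚ))).adjugate (Fin.last n) (Fin.last n)
      = algebraMap ℚ[X] (RatFunc ℚ) (Umatrix ℚ n).charpoly := by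
    rw [← RingHom.mapMatrix_apply, ← RingHom.map_adjugate, RingHom.mapMatrix_apply,
      Matrix.map_apply, adjugate_charmatrix_Umatrix_last]
  have hne (n : ℕ) : algebraMap ℚ[X] (RatFunc ℚ) (Umatrix ℚ n).charpoly ≠ 0 :=
    hdet n ▸ det_charmatrix_Umatrix_map_ne_zero n
  have hC : (C (3 : ℚ) : ℚ[X]) = 3 := map_ofNat C 3
  rw [← charpoly_reindex (Equiv.ofBijective _ (thetaIdx_bijective _ _ _)).symm,
    reindex_apply, Equiv.symm_symm, Equiv.coe_ofBijective, thetaMinor_submatrix_thetaIdx,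
    Matrix.charpoly, RingHom.map_det, RingHom.mapMatrix_apply, charmatrix_fromBlocks_single_map,
    charmatrix_fromBlocks_single_map, charmatrix_fromBlocks_single_map,
    det_fromBlocks_single _ (det_charmatrix_Umatrix_map_ne_zero _), fromBlocks_sub_single_inr,
    fromBlocks_sub_single_inr,
    det_fromBlocks_single _ (det_charmatrix_Umatrix_map_ne_zero _), fromBlocks_sub_single_inr,
    det_fromBlocks_single _ (det_charmatrix_Umatrix_map_ne_zero _), det_unique (n := Unit)]
  simp only [hdet, hadj, Matrix.sub_apply, Matrix.map_apply, charmatrix_apply_eq, Matrix.of_apply, Matrix.single_apply,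
    hC, map_sub, map_mul]
  have h1 := hne (r + 1)
  have h2 := hne (s + 1)
  have h3 := hne (t + 1)
  simp only [and_self, if_true]
  field_simp
  -- Both sides now agree up to `n + 1 - 1 = n`, which holds definitionally.
  rfl
end

section
/- For all integers r, s, t ≥ 2, the following identity of polynomials in x holds: φ(L(Θ_{r,s,t});x) = (x−3)·φ(θ_{r,s,t};x) − φ(θ_{r−1,s,t};x) − φ(θ_{r,s−1,t};x) − φ(θ_{r,s,t−1};x) − 2·(−1)^{s+t}·φ(U_r;x) − 2·(−1)^{r+t}·φ(U_s;x) − 2·(−1)^{r+s}·φ(U_t;x). -/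
/-! Put `y = x - 2` and `p_n = φ(U_n; x)`. Ordering the vertices of `Θ_{r,s,t}` as the two branch
vertices followed by the three paths, `xI - L` becomes a `2 + (r + s + t)` block matrix whose
lower right block is the direct sum of the tridiagonal matrices `xI - U_r`, `xI - U_s`,
`xI - U_t` (`thetaEntry_label`). Over the field of rational functions the Schur complement of that
block only involves the corner entries of the three inverses, which are `p_{m-1} / p_m` and
`(-1)^(m-1) / p_m` (`endMat_mul_solMat`). It is a `2 × 2` matrix with both diagonal entries equal
to `q = x - 3 - ∑ p_{m-1} / p_m` and both off-diagonal entries equal to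
`w = ∑ (-1)^m / p_m`, the sums being over `m = r, s, t`. Hence `φ(L(Θ)) = p_r p_s p_t (q² - w²)`
and `φ(θ) = p_r p_s p_t q` (`det_modelMat`, `det_modelMat_minor`).

Substituting these closed forms, with `r`, `s`, `t` lowered by one where required, the two sides
agree because of `p_{m-1}² - p_m p_{m-2} = 1` (`pathDet_sq`): the squares in `w²` absorb these
differences, and the cross terms of `w²` are the three terms with `φ(U_r)`, `φ(U_s)`, `φ(U_t)`. -/


open Polynomial Matrix SimpleGraph
open scoped Classical

/-! ### Path matrices and their determinants -/

/-- The determinants `p_n` of `xI - U_n`, given by their three-term recurrence in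
`y = x - 2`. -/
def pathDet {R : Type*} [CommRing R] (y : R) : ℕ → R
  | 0 => 1
  | 1 => y
  | n + 2 => y * pathDet y (n + 1) - pathDet y n

/-- The matrix `xI - U_m` written in terms of `y = x - 2`: tridiagonal with `y` on the
diagonal and `1` next to it. -/
def pathMat {R : Type*} [CommRing R] (y : R) (m : ℕ) : Matrix (Fin m) (Fin m) R :=
  Matrix.of fun i j =>
    if (i : ℕ) = (j : ℕ) then y
    else if (i : ℕ) + 1 = (j : ℕ) ∨ (j : ℕ) + 1 = (i : ℕ) then 1 else 0

theorem det_pathMat {R : Type*} [CommRing R] (y : R) :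
    ∀ m, (pathMat y m).det = pathDet y m
  | 0 => by simp [pathDet]
  | 1 => by simp [pathDet, pathMat]
  | n + 2 => by
    have h1 : (pathMat y (n + 2)).submatrix Fin.succ (Fin.succAbove 0) = pathMat y (n + 1) := by
      ext i j; simp [pathMat]
    -- The other minor of the first row has first column `(1, 0, …, 0)`.
    have h2 : ((pathMat y (n + 2)).submatrix Fin.succ (Fin.succAbove 1)).det
        = (pathMat y n).det := by
      rw [det_succ_column_zero, Fin.sum_univ_succ, Finset.sum_eq_zero]
      · have : ((pathMat y (n + 2)).submatrix Fin.succ (Fin.succAbove 1)).submatrix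
            (Fin.succAbove 0) Fin.succ = pathMat y n := by
          ext i j
          simp [pathMat]
        rw [this]
        simp [pathMat]
      · intro i _
        simp [pathMat]
    rw [det_succ_row_zero, Fin.sum_univ_succ, Fin.sum_univ_succ, Finset.sum_eq_zero]
    · rw [h1, Fin.succ_zero_eq_one, h2, det_pathMat y (n + 1), det_pathMat y n]
      simp [pathMat, pathDet]
      ring
    · intro i _
      simp [pathMat]

/-- The Cassini-type identity for the path determinants, on which `modelMat_identity` rests. -/
theorem pathDet_sq {R : Type*} [CommRing R] (y : R) (n : ℕ) :
    pathDet y (n + 1) ^ 2 - pathDet y (n + 2) * pathDet y n = 1 := by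
  induction n with
  | zero => simp [pathDet]; ring
  | succ n ih => rw [← ih]; simp only [pathDet]; ring

/-- A row of `pathMat` applied to a vector given by a sequence `w` on `ℕ`, with the two
boundary cases explicit. -/
theorem pathMat_sum {R : Type*} [CommRing R] (y : R) (m : ℕ) (i : Fin m) (w : ℕ → R) :
    ∑ j, pathMat y m i j * w j = y * w i + (if (i : ℕ) + 1 < m then w (i + 1) else 0)
      + (if 0 < (i : ℕ) then w (i - 1) else 0) := by
  have h (j : Fin m) : pathMat y m i j * w j = (if (j : ℕ) = i then y * w i else 0)
      + (if (j : ℕ) = i + 1 then w (i + 1) else 0)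
      + (if (j : ℕ) = i - 1 then (if 0 < (i : ℕ) then w (i - 1) else 0) else 0) := by
    simp only [pathMat, Matrix.of_apply]
    rcases i with ⟨i, hi⟩
    rcases j with ⟨j, hj⟩
    dsimp only
    rcases lt_trichotomy i j with hlt | rfl | hlt
    · by_cases h : i + 1 = j
      · subst h; simp; intro hh; omega
      · have : j ≠ i + 1 := by omega
        have : j ≠ i - 1 := by omega
        have : j + 1 ≠ i := by omega
        simp [*, hlt.ne, hlt.ne']
    · rcases Nat.eq_zero_or_pos i with rfl | h
      · simp
      · have : i ≠ i - 1 := by omega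
        simp [this]
    · by_cases h : j + 1 = i
      · subst h
        have : j ≠ j + 1 + 1 := by omega
        simp [this]
      · have : j ≠ i + 1 := by omega
        have : j ≠ i - 1 := by omega
        have : i + 1 ≠ j := by omega
        simp [*, hlt.ne, hlt.ne']
  simp only [h, Finset.sum_add_distrib]
  have key (k : ℕ) (c : R) : ∑ j : Fin m, (if (j : ℕ) = k then c else 0)
      = if k < m then c else 0 := by
    rw [Fin.sum_univ_eq_sum_range (fun j => if j = k then c else 0), Finset.sum_ite_eq']
    simp
  have hi : (i : ℕ) - 1 < m := by have := i.2; omega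
  rw [key, key, key, if_pos i.2, if_pos hi]

/-- The `2 × m` incidence between the two branch vertices and a path: branch vertex `0` is
attached to the first vertex of the path, branch vertex `1` to its last. -/
def endMat (K : Type*) [CommRing K] (m : ℕ) : Matrix (Fin 2) (Fin m) K :=
  Matrix.of fun a j => if a = 0 then (if (j : ℕ) = 0 then 1 else 0)
    else (if (j : ℕ) + 1 = m then 1 else 0)

/-- The product of the inverse of `pathMat y (n + 1)` with the transpose of `endMat`, i.e. the
first and the last column of that inverse (see `pathMat_mul_solMat`). The sign of the last
column is `(-1)^(n+j)`, which equals `(-1)^(n-j)`. -/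
def solMat {K : Type*} [Field K] (y : K) (n : ℕ) : Matrix (Fin (n + 1)) (Fin 2) K :=
  Matrix.of fun j a => if a = 0 then (-1) ^ (j : ℕ) * pathDet y (n - j) / pathDet y (n + 1)
    else (-1) ^ (n + j : ℕ) * pathDet y j / pathDet y (n + 1)

theorem pathMat_mul_solMat {K : Type*} [Field K] (y : K) (n : ℕ)
    (h : pathDet y (n + 1) ≠ 0) :
    pathMat y (n + 1) * solMat y n = (endMat K (n + 1))ᵀ := by
  ext i a
  rw [Matrix.mul_apply]
  obtain ⟨i, hi⟩ := i
  fin_cases a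
  · simp only [solMat, endMat, Matrix.of_apply, Matrix.transpose_apply, Fin.zero_eta, if_true]
    rw [pathMat_sum y (n + 1) ⟨i, hi⟩
      (fun j => (-1) ^ j * pathDet y (n - j) / pathDet y (n + 1))]
    obtain ⟨k, rfl⟩ : ∃ k, n = i + k := ⟨n - i, by omega⟩
    rcases i with _ | i <;> rcases k with _ | k
    · simp [pathDet] at *; field_simp
    · simp [pathDet] at *
      field_simp; ring
    · have e1 : i + 1 + 0 - i = 1 := by omega
      simp [e1, pathDet] at *; field_simp; ring
    · have e1 : i + 1 + (k + 1) - i = k + 2 := by omega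
      have e2 : i + 1 + (k + 1) - (i + 1) = k + 1 := by omega
      have e3 : i + 1 + (k + 1) - (i + 1 + 1) = k := by omega
      simp [e1, e2, e3]; field_simp
      simp [pathDet]; ring
  · simp only [solMat, endMat, Matrix.of_apply, Matrix.transpose_apply, Fin.mk_one, if_false,
      one_ne_zero]
    rw [pathMat_sum y (n + 1) ⟨i, hi⟩
      (fun j => (-1) ^ (n + j) * pathDet y j / pathDet y (n + 1))]
    obtain ⟨k, rfl⟩ : ∃ k, n = i + k := ⟨n - i, by omega⟩
    have e (k : ℕ) : ((-1 : K) ^ k) * (-1) ^ k = 1 := by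
      rw [← mul_pow]; simp
    rcases i with _ | i <;> rcases k with _ | k
    · simp [pathDet] at *; field_simp
    · simp [pathDet, pow_succ] at *
      field_simp; ring
    · simp [pathDet, pow_succ, pow_add] at *; field_simp
      linear_combination (y * pathDet y (i + 1) - pathDet y i) * e i
    · simp; field_simp
      simp [pathDet]; ring

/-- The four corner entries of the inverse of `pathMat y (n + 1)`. -/
theorem endMat_mul_solMat {K : Type*} [Field K] (y : K) (n : ℕ) :
    endMat K (n + 1) * solMat y n = !![pathDet y n / pathDet y (n + 1),
      (-1) ^ n / pathDet y (n + 1); (-1) ^ n / pathDet y (n + 1),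
      pathDet y n / pathDet y (n + 1)] := by
  have h0 (f : Fin (n + 1) → K) :
      ∑ j : Fin (n + 1), (if (j : ℕ) = 0 then f j else 0) = f 0 := by
    rw [Finset.sum_eq_single 0] <;> simp +contextual
  have h1 (f : Fin (n + 1) → K) :
      ∑ j : Fin (n + 1), (if (j : ℕ) = n then f j else 0) = f (Fin.last n) := by
    rw [Finset.sum_eq_single (Fin.last n)]
    · simp
    · intro b _ hb
      have : (b : ℕ) ≠ n := fun h => hb (Fin.ext h)
      rw [if_neg this]
    · simp
  have e : ((-1 : K) ^ (n + n)) = 1 := by rw [← two_mul, pow_mul]; simp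
  ext a b
  rw [Matrix.mul_apply]
  fin_cases a <;> fin_cases b <;>
    simp [endMat, solMat, h1, pathDet, e]

/-! ### Schur complements of the three-path matrix -/

/-- The Schur complement formula, over any commutative ring, with `D⁻¹ C` replaced by a
solution `W` of `D W = C`. -/
theorem det_fromBlocks_of_mul_eq {R ι κ : Type*} [CommRing R] [Fintype ι] [Fintype κ]
    [DecidableEq ι] [DecidableEq κ] (A : Matrix ι ι R) (B : Matrix ι κ R) (C : Matrix κ ι R)
    (D : Matrix κ κ R) (W : Matrix κ ι R) (h : D * W = C) :
    (fromBlocks A B C D).det = D.det * (A - B * W).det := by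
  have : fromBlocks A B C D = fromBlocks (A - B * W) B 0 D * fromBlocks 1 0 W 1 := by
    simp [fromBlocks_multiply, h]
  rw [this, det_mul, det_fromBlocks_zero₂₁, det_fromBlocks_zero₁₂]
  simp [mul_comm]

/-- The block of `xI - L(Θ_{r,s,t})` indexed by the internal vertices of the three paths. -/
def joinMat {K : Type*} [CommRing K] (y : K) (r s t : ℕ) :
    Matrix (Fin r ⊕ Fin s ⊕ Fin t) (Fin r ⊕ Fin s ⊕ Fin t) K :=
  fromBlocks (pathMat y r) 0 0 (fromBlocks (pathMat y s) 0 0 (pathMat y t))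

/-- The block of `xI - L(Θ_{r,s,t})` between branch vertices and internal vertices. -/
def joinEnd (K : Type*) [CommRing K] (r s t : ℕ) :
    Matrix (Fin 2) (Fin r ⊕ Fin s ⊕ Fin t) K :=
  fromCols (endMat K r) (fromCols (endMat K s) (endMat K t))

/-- The matrix `xI - L(Θ_{r,s,t})` in terms of `y = x - 2`, with the vertices grouped as the two
branch vertices followed by the three paths (see `thetaEntry_label`). -/
def modelMat {K : Type*} [CommRing K] (y : K) (r s t : ℕ) :
    Matrix (Fin 2 ⊕ Fin r ⊕ Fin s ⊕ Fin t) (Fin 2 ⊕ Fin r ⊕ Fin s ⊕ Fin t) K :=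
  fromBlocks ((y - 1) • (1 : Matrix (Fin 2) (Fin 2) K)) (joinEnd K r s t) (joinEnd K r s t)ᵀ
    (joinMat y r s t)

/-- The inclusion of the indices that remain after deleting branch vertex `0`. -/
def minorIdx {κ : Type*} : Unit ⊕ κ → Fin 2 ⊕ κ := Sum.map (fun _ => 1) id

section
variable {K : Type*} [Field K] (y : K) (r s t : ℕ)

/-- The solution `W` of `joinMat * W = joinEndᵀ`. -/
def joinSol : Matrix (Fin (r+1) ⊕ Fin (s+1) ⊕ Fin (t+1)) (Fin 2) K :=
  fromRows (solMat y r) (fromRows (solMat y s) (solMat y t))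

theorem joinMat_mul_joinSol (hr : pathDet y (r + 1) ≠ 0) (hs : pathDet y (s + 1) ≠ 0)
    (ht : pathDet y (t + 1) ≠ 0) :
    joinMat y (r+1) (s+1) (t+1) * joinSol y r s t = (joinEnd K (r+1) (s+1) (t+1))ᵀ := by
  simp [joinMat, joinSol, joinEnd, fromBlocks_mul_fromRows, pathMat_mul_solMat, hr, hs, ht,
    transpose_fromCols]

theorem joinEnd_mul_joinSol :
    joinEnd K (r+1) (s+1) (t+1) * joinSol y r s t =
      endMat K (r + 1) * solMat y r + (endMat K (s + 1) * solMat y s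
        + endMat K (t + 1) * solMat y t) := by
  simp [joinSol, joinEnd, fromCols_mul_fromRows]

theorem det_joinMat : (joinMat y r s t).det = pathDet y r * (pathDet y s * pathDet y t) := by
  simp [joinMat, det_pathMat]

/-- The Schur complement is a symmetric `2 × 2` matrix with equal diagonal entries, so its
determinant is a difference of two squares. -/
theorem det_modelMat (hr : pathDet y (r + 1) ≠ 0) (hs : pathDet y (s + 1) ≠ 0)
    (ht : pathDet y (t + 1) ≠ 0) :
    (modelMat y (r + 1) (s + 1) (t + 1)).det =
      pathDet y (r + 1) * (pathDet y (s + 1) * pathDet y (t + 1)) *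
      ((y - 1 - pathDet y r / pathDet y (r + 1) - pathDet y s / pathDet y (s + 1)
        - pathDet y t / pathDet y (t + 1)) ^ 2
      - ((-1) ^ r / pathDet y (r + 1) + (-1) ^ s / pathDet y (s + 1)
        + (-1) ^ t / pathDet y (t + 1)) ^ 2) := by
  rw [modelMat, det_fromBlocks_of_mul_eq _ _ _ _ _ (joinMat_mul_joinSol y r s t hr hs ht),
    det_joinMat, joinEnd_mul_joinSol, endMat_mul_solMat, endMat_mul_solMat, endMat_mul_solMat,
    det_fin_two]
  congr 1
  simp
  ring

/-- Deleting branch vertex `0` leaves the other diagonal entry of the Schur complement of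
`det_modelMat`. -/
theorem det_modelMat_minor (hr : pathDet y (r + 1) ≠ 0) (hs : pathDet y (s + 1) ≠ 0)
    (ht : pathDet y (t + 1) ≠ 0) :
    ((modelMat y (r + 1) (s + 1) (t + 1)).submatrix minorIdx minorIdx).det =
      pathDet y (r + 1) * (pathDet y (s + 1) * pathDet y (t + 1)) *
      (y - 1 - pathDet y r / pathDet y (r + 1) - pathDet y s / pathDet y (s + 1)
        - pathDet y t / pathDet y (t + 1)) := by
  have h1 : (modelMat y (r + 1) (s + 1) (t + 1)).submatrix minorIdx minorIdx
      = fromBlocks (((y - 1) • (1 : Matrix (Fin 2) (Fin 2) K)).submatrix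
          (fun _ : Unit => 1) (fun _ : Unit => 1))
        ((joinEnd K (r+1) (s+1) (t+1)).submatrix (fun _ => 1) id)
        ((joinEnd K (r+1) (s+1) (t+1))ᵀ.submatrix id (fun _ => 1))
        (joinMat y (r+1) (s+1) (t+1)) := by
    ext (i | i) (j | j) <;> rfl
  have h2 : joinMat y (r+1) (s+1) (t+1) * (joinSol y r s t).submatrix id (fun _ : Unit => 1)
      = (joinEnd K (r+1) (s+1) (t+1))ᵀ.submatrix id (fun _ => 1) := by
    rw [← joinMat_mul_joinSol y r s t hr hs ht]; rfl
  have h3 : (joinEnd K (r+1) (s+1) (t+1)).submatrix (fun _ : Unit => 1) id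
      * (joinSol y r s t).submatrix id (fun _ : Unit => 1)
      = (joinEnd K (r+1) (s+1) (t+1) * joinSol y r s t).submatrix (fun _ => 1) (fun _ => 1) := rfl
  rw [h1, det_fromBlocks_of_mul_eq _ _ _ _ _ h2, h3, det_joinMat, joinEnd_mul_joinSol,
    endMat_mul_solMat, endMat_mul_solMat, endMat_mul_solMat, det_unique]
  congr 1
  simp
  ring

end

/-- The claimed identity over a field in which no `p_n` vanishes. Once the determinants are
replaced by their closed forms it is a consequence of `pathDet_sq` and `((-1)^k)² = 1`. -/
theorem modelMat_identity {K : Type*} [Field K] (y : K) (h : ∀ n, pathDet y n ≠ 0)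
    (r s t : ℕ) :
    (modelMat y (r + 2) (s + 2) (t + 2)).det =
      (y - 1) * ((modelMat y (r + 2) (s + 2) (t + 2)).submatrix minorIdx minorIdx).det
      - ((modelMat y (r + 1) (s + 2) (t + 2)).submatrix minorIdx minorIdx).det
      - ((modelMat y (r + 2) (s + 1) (t + 2)).submatrix minorIdx minorIdx).det
      - ((modelMat y (r + 2) (s + 2) (t + 1)).submatrix minorIdx minorIdx).det
      - 2 * (-1) ^ (s + 2 + (t + 2)) * pathDet y (r + 2)
      - 2 * (-1) ^ (r + 2 + (t + 2)) * pathDet y (s + 2)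
      - 2 * (-1) ^ (r + 2 + (s + 2)) * pathDet y (t + 2) := by
  rw [det_modelMat y (r+1) (s+1) (t+1) (h _) (h _) (h _),
    det_modelMat_minor y (r+1) (s+1) (t+1) (h _) (h _) (h _),
    det_modelMat_minor y r (s+1) (t+1) (h _) (h _) (h _),
    det_modelMat_minor y (r+1) s (t+1) (h _) (h _) (h _),
    det_modelMat_minor y (r+1) (s+1) t (h _) (h _) (h _)]
  have hr := pathDet_sq y r
  have hs := pathDet_sq y s
  have ht := pathDet_sq y t
  have e (k : ℕ) : ((-1 : K) ^ k) ^ 2 = 1 := by rw [← pow_mul, mul_comm, pow_mul]; simp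
  have er := e r
  have es := e s
  have et := e t
  have r1 := h (r + 1)
  have r2 := h (r + 2)
  have s1 := h (s + 1)
  have s2 := h (s + 2)
  have t1 := h (t + 1)
  have t2 := h (t + 2)
  simp only [pow_add, show ∀ k, k + 1 + 1 = k + 2 from fun _ => rfl]
  generalize (-1 : K) ^ r = a at *
  generalize (-1 : K) ^ s = b at *
  generalize (-1 : K) ^ t = c at *
  generalize pathDet y r = R0 at *
  generalize pathDet y (r+1) = R1 at *
  generalize pathDet y (r+2) = R2 at *
  generalize pathDet y s = S0 at *
  generalize pathDet y (s+1) = S1 at *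
  generalize pathDet y (s+2) = S2 at *
  generalize pathDet y t = T0 at *
  generalize pathDet y (t+1) = T1 at *
  generalize pathDet y (t+2) = T2 at *
  -- With `P = R2 S2 T2`, the two sides differ by the sum over the three paths of `P / p²` times
  -- `(p_{m-1}² - p_m p_{m-2}) - ((-1)^m)²`, where `p = p_m` for the path with `m` vertices.
  linear_combination (norm := skip) S2 * T2 / R2 * (hr - er) + R2 * T2 / S2 * (hs - es)
    + R2 * S2 / T2 * (ht - et)
  field_simp
  ring

/-! ### Base change from `ℚ[X]` -/

theorem pathMat_eq_charmatrix (n : ℕ) :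
    pathMat (X - 2 : ℚ[X]) n = charmatrix (Umatrix ℚ n) := by
  ext1 i j
  by_cases h : i = j
  · subst h
    simp [pathMat, Umatrix, map_ofNat C 2]
  · have h' : (i : ℕ) ≠ j := fun e => h (Fin.ext e)
    rw [charmatrix_apply_ne _ _ _ h]
    simp only [pathMat, Umatrix, Matrix.of_apply, if_neg h']
    split_ifs <;> simp

theorem charpoly_Umatrix (n : ℕ) : (Umatrix ℚ n).charpoly = pathDet (X - 2 : ℚ[X]) n := by
  rw [Matrix.charpoly, ← pathMat_eq_charmatrix, det_pathMat]

theorem map_pathDet {R S : Type*} [CommRing R] [CommRing S] (f : R →+* S) (y : R) :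
    ∀ n, f (pathDet y n) = pathDet (f y) n
  | 0 => by simp [pathDet]
  | 1 => by simp [pathDet]
  | n + 2 => by simp [pathDet, map_pathDet f y (n + 1), map_pathDet f y n]

theorem map_modelMat {R S : Type*} [CommRing R] [CommRing S] (f : R →+* S) (y : R) (r s t : ℕ) :
    (modelMat y r s t).map f = modelMat (f y) r s t := by
  ext (i | i | i | i) (j | j | j | j) <;>
    simp [modelMat, joinMat, joinEnd, pathMat, endMat, Matrix.one_apply, apply_ite f]

/-! ### Adjacency and degrees in the theta graph -/

/-- The relation whose symmetrization is adjacency in `Θ_{r,s,t}`. -/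
def thetaRel (r s t a b : ℕ) : Prop :=
  thetaBlockRel (r + s + t + 1) 1 r a b ∨ thetaBlockRel (r + s + t + 1) (r + 1) s a b ∨
    thetaBlockRel (r + s + t + 1) (r + s + 1) t a b

theorem thetaGraph_adj (r s t : ℕ) (a b : Fin (r + s + t + 2)) :
    (thetaGraph r s t).Adj a b ↔
      (a : ℕ) ≠ b ∧ (thetaRel r s t a b ∨ thetaRel r s t b a) := by
  simp [thetaGraph, thetaRel, SimpleGraph.fromRel_adj, Fin.ext_iff]

/-- The two neighbours of an internal vertex: its predecessor (or branch vertex `0`) and its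
successor (or the other branch vertex). -/
theorem adj_internal (r s t a b : ℕ) (hr : r ≠ 0) (hs : s ≠ 0) (ht : t ≠ 0) (h0 : a ≠ 0)
    (hv : a < r + s + t + 1) :
    (a ≠ b ∧ (thetaRel r s t a b ∨ thetaRel r s t b a)) ↔
      (b = (if a = 1 ∨ a = r + 1 ∨ a = r + s + 1 then 0 else a - 1) ∨
       b = (if a = r ∨ a = r + s ∨ a = r + s + t then r + s + t + 1 else a + 1)) := by
  simp only [thetaRel, thetaBlockRel, hr, hs, ht, if_false]
  grind

theorem adj_zero (r s t b : ℕ) (hr : r ≠ 0) (hs : s ≠ 0) (ht : t ≠ 0) :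
    (0 ≠ b ∧ (thetaRel r s t 0 b ∨ thetaRel r s t b 0)) ↔
      (b = 1 ∨ b = r + 1 ∨ b = r + s + 1) := by
  simp only [thetaRel, thetaBlockRel, hr, hs, ht, if_false]
  grind (splits := 40)

theorem adj_last (r s t b : ℕ) (hr : r ≠ 0) (hs : s ≠ 0) (ht : t ≠ 0) :
    (r + s + t + 1 ≠ b ∧
      (thetaRel r s t (r + s + t + 1) b ∨ thetaRel r s t b (r + s + t + 1))) ↔
      (b = r ∨ b = r + s ∨ b = r + s + t) := by
  simp only [thetaRel, thetaBlockRel, hr, hs, ht, if_false]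
  grind (splits := 40)

theorem card_three {n : ℕ} (a b c : Fin n) (h1 : (a : ℕ) ≠ b) (h2 : (a : ℕ) ≠ c)
    (h3 : (b : ℕ) ≠ c) : ({a, b, c} : Finset (Fin n)).card = 3 :=
  Finset.card_eq_three.2 ⟨a, b, c, fun h => h1 (congrArg _ h), fun h => h2 (congrArg _ h),
    fun h => h3 (congrArg _ h), rfl⟩

theorem thetaGraph_degree (r s t : ℕ) (hr : r ≠ 0) (hs : s ≠ 0) (ht : t ≠ 0)
    (a : Fin (r + s + t + 2)) [Fintype ((thetaGraph r s t).neighborSet a)] :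
    (thetaGraph r s t).degree a
      = if (a : ℕ) = 0 ∨ (a : ℕ) = r + s + t + 1 then 3 else 2 := by
  have key (S : Finset (Fin (r + s + t + 2)))
      (h : ∀ b, (thetaGraph r s t).Adj a b ↔ b ∈ S) : (thetaGraph r s t).degree a = S.card := by
    rw [← SimpleGraph.card_neighborFinset_eq_degree]
    congr 1
    ext b
    rw [SimpleGraph.mem_neighborFinset, h]
  obtain ⟨a, ha⟩ := a
  by_cases h0 : a = 0
  · rw [key {⟨1, by omega⟩, ⟨r + 1, by omega⟩, ⟨r + s + 1, by omega⟩}, card_three, if_pos]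
    · exact Or.inl h0
    any_goals dsimp only; omega
    rintro ⟨b, hb⟩
    subst h0
    rw [thetaGraph_adj, adj_zero r s t b hr hs ht]
    simp only [Finset.mem_insert, Finset.mem_singleton, Fin.mk.injEq]
  by_cases hv : a = r + s + t + 1
  · rw [key {⟨r, by omega⟩, ⟨r + s, by omega⟩, ⟨r + s + t, by omega⟩}, card_three, if_pos]
    · exact Or.inr hv
    any_goals dsimp only; omega
    rintro ⟨b, hb⟩
    subst hv
    rw [thetaGraph_adj, adj_last r s t b hr hs ht]
    simp only [Finset.mem_insert, Finset.mem_singleton, Fin.mk.injEq]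
  · have hp : (if a = 1 ∨ a = r + 1 ∨ a = r + s + 1 then 0 else a - 1) < r + s + t + 2 := by
      split_ifs <;> omega
    have hq : (if a = r ∨ a = r + s ∨ a = r + s + t then r + s + t + 1 else a + 1)
        < r + s + t + 2 := by
      split_ifs <;> omega
    rw [key {⟨_, hp⟩, ⟨_, hq⟩}, Finset.card_pair, if_neg]
    · exact fun h => h.elim h0 hv
    · have h1 : (if a = 1 ∨ a = r + 1 ∨ a = r + s + 1 then 0 else a - 1) < a := by
        split_ifs <;> omega
      have h2 : a < (if a = r ∨ a = r + s ∨ a = r + s + t then r + s + t + 1 else a + 1) := by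
        split_ifs <;> omega
      rw [Ne, Fin.mk.injEq]
      exact (h1.trans h2).ne
    · rintro ⟨b, hb⟩
      rw [thetaGraph_adj, adj_internal r s t a b hr hs ht h0 (by omega)]
      simp only [Finset.mem_insert, Finset.mem_singleton, Fin.mk.injEq]

/-! ### The characteristic matrix in block form -/

/-- The entries of `xI - L(Θ_{r,s,t})` as a function of natural number labels. -/
noncomputable def thetaEntry (r s t : ℕ) (a b : ℕ) : ℚ[X] :=
  if a = b then (if a = 0 ∨ a = r + s + t + 1 then X - 3 else X - 2)
  else if thetaRel r s t a b ∨ thetaRel r s t b a then 1 else 0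

theorem charmatrix_theta (r s t : ℕ) (hr : r ≠ 0) (hs : s ≠ 0) (ht : t ≠ 0)
    (a b : Fin (r + s + t + 2)) :
    charmatrix ((thetaGraph r s t).lapMatrix ℚ) a b = thetaEntry r s t a b := by
  by_cases h : a = b
  · subst h
    rw [charmatrix_apply_eq]
    simp only [SimpleGraph.lapMatrix, SimpleGraph.degMatrix, Matrix.sub_apply,
      Matrix.diagonal_apply_eq, thetaGraph_degree r s t hr hs ht, thetaEntry, if_true,
      SimpleGraph.adjMatrix_apply, SimpleGraph.irrefl, if_false]
    split_ifs <;> simp [map_ofNat C 2, map_ofNat C 3]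
  · have h' : (a : ℕ) ≠ b := fun e => h (Fin.ext e)
    rw [charmatrix_apply_ne _ _ _ h, thetaEntry, if_neg h']
    simp only [SimpleGraph.lapMatrix, SimpleGraph.degMatrix, Matrix.sub_apply,
      Matrix.diagonal_apply_ne _ h, SimpleGraph.adjMatrix_apply, thetaGraph_adj, h', ne_eq,
      not_false_eq_true, true_and]
    split_ifs <;> simp

/-- The label in `Θ_{r,s,t}` of an index of `modelMat`. -/
def thetaLabel (r s t : ℕ) : Fin 2 ⊕ Fin r ⊕ Fin s ⊕ Fin t → ℕ
  | .inl a => if a = 0 then 0 else r + s + t + 1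
  | .inr (.inl j) => 1 + j
  | .inr (.inr (.inl j)) => r + 1 + j
  | .inr (.inr (.inr j)) => r + s + 1 + j

theorem thetaLabel_injective (r s t : ℕ) : Function.Injective (thetaLabel r s t) := by
  rintro (i | i | i | i) (j | j | j | j) h
  · fin_cases i <;> fin_cases j <;> simp [thetaLabel] at h ⊢
  all_goals
    simp only [thetaLabel] at h
    try split_ifs at h
  all_goals first
    | (exfalso; omega)
    | (simp only [Sum.inr.injEq, Sum.inl.injEq]; omega)

theorem thetaLabel_lt (r s t : ℕ) (z) : thetaLabel r s t z < r + s + t + 2 := by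
  rcases z with i | i | i | i
  · simp only [thetaLabel]; split_ifs <;> omega
  all_goals simp only [thetaLabel]; omega

theorem thetaLabel_minorIdx_pos (r s t : ℕ) (z) : 0 < thetaLabel r s t (minorIdx z) := by
  rcases z with i | i | i | i <;> simp [thetaLabel, minorIdx]

theorem thetaEntry_comm (r s t a b : ℕ) : thetaEntry r s t a b = thetaEntry r s t b a := by
  by_cases h : a = b
  · rw [h]
  · simp only [thetaEntry, if_neg h, if_neg (Ne.symm h), or_comm]

theorem thetaEntry_of_ne {r s t a b : ℕ} (h : a ≠ b) {p : Prop} [Decidable p]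
    (h' : thetaRel r s t a b ∨ thetaRel r s t b a ↔ p) :
    thetaEntry r s t a b = if p then 1 else 0 := by
  rw [thetaEntry, if_neg h]
  exact if_congr h' rfl rfl

/-- Entries within one path. Here and in the following lemmas `L` is the label of the first vertex of a
path and `m` its number of vertices. -/
theorem thetaEntry_same {r s t L m i j : ℕ} (hr : r ≠ 0) (hs : s ≠ 0) (ht : t ≠ 0)
    (h : (L = 1 ∧ m = r) ∨ (L = r + 1 ∧ m = s) ∨ (L = r + s + 1 ∧ m = t))
    (hi : i < m) (hj : j < m) :
    thetaEntry r s t (L + i) (L + j)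
      = if i = j then X - 2 else if i + 1 = j ∨ j + 1 = i then 1 else 0 := by
  by_cases hij : i = j
  · subst hij
    rw [thetaEntry, if_pos rfl, if_pos rfl, if_neg (by omega)]
  · rw [if_neg hij]
    apply thetaEntry_of_ne (by omega)
    simp only [thetaRel, thetaBlockRel, hr, hs, ht, if_false]
    rcases h with ⟨rfl, rfl⟩ | ⟨rfl, rfl⟩ | ⟨rfl, rfl⟩ <;> grind (splits := 40)

theorem thetaEntry_zero {r s t L m i : ℕ} (hr : r ≠ 0) (hs : s ≠ 0) (ht : t ≠ 0)
    (h : (L = 1 ∧ m = r) ∨ (L = r + 1 ∧ m = s) ∨ (L = r + s + 1 ∧ m = t)) (hi : i < m) :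
    thetaEntry r s t 0 (L + i) = if i = 0 then 1 else 0 := by
  apply thetaEntry_of_ne (by omega)
  simp only [thetaRel, thetaBlockRel, hr, hs, ht, if_false]
  rcases h with ⟨rfl, rfl⟩ | ⟨rfl, rfl⟩ | ⟨rfl, rfl⟩ <;> grind (splits := 40)

theorem thetaEntry_last {r s t L m i : ℕ} (hr : r ≠ 0) (hs : s ≠ 0) (ht : t ≠ 0)
    (h : (L = 1 ∧ m = r) ∨ (L = r + 1 ∧ m = s) ∨ (L = r + s + 1 ∧ m = t)) (hi : i < m) :
    thetaEntry r s t (r + s + t + 1) (L + i) = if i + 1 = m then 1 else 0 := by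
  apply thetaEntry_of_ne (by omega)
  simp only [thetaRel, thetaBlockRel, hr, hs, ht, if_false]
  rcases h with ⟨rfl, rfl⟩ | ⟨rfl, rfl⟩ | ⟨rfl, rfl⟩ <;> grind (splits := 40)

theorem thetaEntry_end {r s t L m i : ℕ} (hr : r ≠ 0) (hs : s ≠ 0) (ht : t ≠ 0)
    (h : (L = 1 ∧ m = r) ∨ (L = r + 1 ∧ m = s) ∨ (L = r + s + 1 ∧ m = t)) (hi : i < m)
    (a : Fin 2) :
    thetaEntry r s t (if a = 0 then 0 else r + s + t + 1) (L + i) = endMat ℚ[X] m a ⟨i, hi⟩ := by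
  simp only [endMat, Matrix.of_apply]
  split_ifs with ha
  all_goals first
    | rw [thetaEntry_zero hr hs ht h hi]
    | rw [thetaEntry_last hr hs ht h hi]
  all_goals simp [*]

theorem thetaEntry_distinct {r s t L m i L' m' j : ℕ} (hr : r ≠ 0) (hs : s ≠ 0) (ht : t ≠ 0)
    (h : (L = 1 ∧ m = r ∧ ((L' = r + 1 ∧ m' = s) ∨ (L' = r + s + 1 ∧ m' = t))) ∨
      (L = r + 1 ∧ m = s ∧ L' = r + s + 1 ∧ m' = t))
    (hi : i < m) (hj : j < m') :
    thetaEntry r s t (L + i) (L' + j) = 0 := by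
  rw [thetaEntry_of_ne (p := False) (by omega), if_neg not_false]
  simp only [thetaRel, thetaBlockRel, hr, hs, ht, if_false]
  rcases h with ⟨rfl, rfl, ⟨rfl, rfl⟩ | ⟨rfl, rfl⟩⟩ | ⟨rfl, rfl, rfl, rfl⟩ <;>
    grind (splits := 40)

theorem thetaEntry_label (r s t : ℕ) (hr : r ≠ 0) (hs : s ≠ 0) (ht : t ≠ 0) (z w) :
    thetaEntry r s t (thetaLabel r s t z) (thetaLabel r s t w)
      = modelMat (X - 2 : ℚ[X]) r s t z w := by
  have e3 : (X - 2 - 1 : ℚ[X]) = X - 3 := by ring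
  have c1 : (1 = 1 ∧ r = r) ∨ (1 = r + 1 ∧ r = s) ∨ (1 = r + s + 1 ∧ r = t) := by simp
  have c2 : (r + 1 = 1 ∧ s = r) ∨ (r + 1 = r + 1 ∧ s = s) ∨ (r + 1 = r + s + 1 ∧ s = t) := by simp
  have c3 : (r + s + 1 = 1 ∧ t = r) ∨ (r + s + 1 = r + 1 ∧ t = s) ∨
    (r + s + 1 = r + s + 1 ∧ t = t) := by simp
  rcases z with i | i | i | i <;> rcases w with j | j | j | j
  · fin_cases i <;> fin_cases j <;>
      simp [modelMat, e3, thetaEntry, thetaLabel, thetaRel, thetaBlockRel, hr, hs, ht]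
    all_goals omega
  · exact thetaEntry_end hr hs ht c1 j.2 i
  · exact thetaEntry_end hr hs ht c2 j.2 i
  · exact thetaEntry_end hr hs ht c3 j.2 i
  · exact (thetaEntry_comm ..).trans (thetaEntry_end hr hs ht c1 i.2 j)
  · exact thetaEntry_same hr hs ht c1 i.2 j.2
  · exact thetaEntry_distinct hr hs ht (by simp) i.2 j.2
  · exact thetaEntry_distinct hr hs ht (by simp) i.2 j.2
  · exact (thetaEntry_comm ..).trans (thetaEntry_end hr hs ht c2 i.2 j)
  · exact (thetaEntry_comm ..).trans (thetaEntry_distinct hr hs ht (by simp) j.2 i.2)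
  · exact thetaEntry_same hr hs ht c2 i.2 j.2
  · exact thetaEntry_distinct hr hs ht (by simp) i.2 j.2
  · exact (thetaEntry_comm ..).trans (thetaEntry_end hr hs ht c3 i.2 j)
  · exact (thetaEntry_comm ..).trans (thetaEntry_distinct hr hs ht (by simp) j.2 i.2)
  · exact (thetaEntry_comm ..).trans (thetaEntry_distinct hr hs ht (by simp) j.2 i.2)
  · exact thetaEntry_same hr hs ht c3 i.2 j.2

/-! ### Characteristic polynomials as determinants of the block form -/

theorem charpoly_lapMatrix_eq_det (r s t : ℕ) (hr : r ≠ 0) (hs : s ≠ 0) (ht : t ≠ 0) :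
    ((thetaGraph r s t).lapMatrix ℚ).charpoly = (modelMat (X - 2 : ℚ[X]) r s t).det := by
  let f : Fin 2 ⊕ Fin r ⊕ Fin s ⊕ Fin t → Fin (r + s + t + 2) :=
    fun z => ⟨thetaLabel r s t z, thetaLabel_lt r s t z⟩
  have hf : Function.Bijective f := by
    rw [Fintype.bijective_iff_injective_and_card]
    refine ⟨fun z w h => thetaLabel_injective r s t (congrArg Fin.val h), ?_⟩
    simp; ring
  rw [Matrix.charpoly, ← det_submatrix_equiv_self (Equiv.ofBijective f hf)]
  congr 1
  ext1 z w
  rw [← thetaEntry_label r s t hr hs ht, submatrix_apply, charmatrix_theta r s t hr hs ht]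
  rfl

theorem charpoly_thetaMinor_eq_det (r s t : ℕ) (hr : r ≠ 0) (hs : s ≠ 0) (ht : t ≠ 0) :
    (thetaMinor r s t).charpoly
      = ((modelMat (X - 2 : ℚ[X]) r s t).submatrix minorIdx minorIdx).det := by
  -- Deletion of a vertex commutes with forming the characteristic matrix.
  have hm : charmatrix (thetaMinor r s t)
      = (charmatrix ((thetaGraph r s t).lapMatrix ℚ)).submatrix Fin.succ Fin.succ := by
    ext1 i j
    by_cases h : i = j
    · subst h
      simp [thetaMinor]
    · rw [charmatrix_apply_ne _ _ _ h, submatrix_apply,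
        charmatrix_apply_ne _ _ _ (fun e => h (Fin.succ_injective _ e))]
      rfl
  have hlt (z) : thetaLabel r s t (minorIdx z) - 1 < r + s + t + 1 := by
    have := thetaLabel_lt r s t (minorIdx z)
    omega
  let f : Unit ⊕ Fin r ⊕ Fin s ⊕ Fin t → Fin (r + s + t + 1) :=
    fun z => ⟨thetaLabel r s t (minorIdx z) - 1, hlt z⟩
  have hsucc (z) : ((f z).succ : ℕ) = thetaLabel r s t (minorIdx z) := by
    have := thetaLabel_minorIdx_pos r s t z
    simp [f]; omega
  have hinj : Function.Injective
      (minorIdx : Unit ⊕ Fin r ⊕ Fin s ⊕ Fin t → Fin 2 ⊕ Fin r ⊕ Fin s ⊕ Fin t) := by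
    rintro (i | i) (j | j) h <;> simp_all [minorIdx]
  have hf : Function.Bijective f := by
    rw [Fintype.bijective_iff_injective_and_card]
    refine ⟨fun z w h => hinj (thetaLabel_injective r s t ?_), ?_⟩
    · rw [← hsucc, ← hsucc, h]
    · simp; ring
  rw [Matrix.charpoly, ← det_submatrix_equiv_self (Equiv.ofBijective f hf), hm]
  congr 1
  ext1 z w
  rw [submatrix_apply, submatrix_apply, submatrix_apply, ← thetaEntry_label r s t hr hs ht,
    charmatrix_theta r s t hr hs ht, Equiv.ofBijective_apply, Equiv.ofBijective_apply, hsucc, hsucc]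

/-- `φ(L(Θ_{r,s,t})) = (x−3)φ(θ_{r,s,t}) − φ(θ_{r−1,s,t}) − φ(θ_{r,s−1,t}) − φ(θ_{r,s,t−1})
− 2(−1)^{s+t}φ(U_r) − 2(−1)^{r+t}φ(U_s) − 2(−1)^{r+s}φ(U_t)`. -/
theorem charpoly_lapMatrix_theta (r s t : ℕ) (hr : 2 ≤ r) (hs : 2 ≤ s) (ht : 2 ≤ t) :
    ((thetaGraph r s t).lapMatrix ℚ).charpoly =
      (X - 3) * (thetaMinor r s t).charpoly
        - (thetaMinor (r - 1) s t).charpoly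
        - (thetaMinor r (s - 1) t).charpoly
        - (thetaMinor r s (t - 1)).charpoly
        - 2 * (-1 : ℚ[X]) ^ (s + t) * (Umatrix ℚ r).charpoly
        - 2 * (-1 : ℚ[X]) ^ (r + t) * (Umatrix ℚ s).charpoly
        - 2 * (-1 : ℚ[X]) ^ (r + s) * (Umatrix ℚ t).charpoly := by
  obtain ⟨r, rfl⟩ := Nat.exists_eq_add_of_le' hr
  obtain ⟨s, rfl⟩ := Nat.exists_eq_add_of_le' hs
  obtain ⟨t, rfl⟩ := Nat.exists_eq_add_of_le' ht
  have e (k : ℕ) : k + 2 - 1 = k + 1 := rfl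
  rw [e, e, e, charpoly_lapMatrix_eq_det _ _ _ (by omega) (by omega) (by omega),
    charpoly_thetaMinor_eq_det _ _ _ (by omega) (by omega) (by omega),
    charpoly_thetaMinor_eq_det _ _ _ (by omega) (by omega) (by omega),
    charpoly_thetaMinor_eq_det _ _ _ (by omega) (by omega) (by omega),
    charpoly_thetaMinor_eq_det _ _ _ (by omega) (by omega) (by omega),
    charpoly_Umatrix, charpoly_Umatrix, charpoly_Umatrix]
  -- The closed forms divide by `p_n`, which is nonzero in the fraction field since it is a
  -- characteristic polynomial.
  let φ := algebraMap ℚ[X] (RatFunc ℚ)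
  have hφ : Function.Injective φ := IsFractionRing.injective ℚ[X] (RatFunc ℚ)
  have hne (n : ℕ) : pathDet (φ (X - 2)) n ≠ 0 := by
    rw [← map_pathDet, ← charpoly_Umatrix]
    exact (map_ne_zero_iff φ hφ).2 (charpoly_monic _).ne_zero
  apply hφ
  have h := modelMat_identity (φ (X - 2)) hne r s t
  simp only [← map_modelMat, ← map_pathDet, submatrix_map] at h
  have hd {ι : Type} [Fintype ι] [DecidableEq ι] (M : Matrix ι ι ℚ[X]) :
      (M.map φ).det = φ M.det := (RingHom.map_det φ M).symm
  simp only [hd] at h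
  have e3 : φ (X - 2) - 1 = φ (X - 3) := by
    rw [← map_one φ, ← map_sub]
    congr 1
    ring
  rw [e3] at h
  simpa only [map_sub, map_mul, map_pow, map_neg, map_one, map_ofNat] using h
end
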